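/- arXiv:1001.4012 — 2 statements merged into one kernel-verified Lean document; each statement's English description precedes it below -/
import Mathlib

section
/- Let X be a complete separable metric space, μ and ν Borel probability measures on X, and c : X × X → [0,∞] lower semicontinuous. If γ ∈ Π(μ,ν) is an optimal transport plan for cost c and ∫ c dγ < ∞, then γ is concentrated on a Borel c-cyclically monotone set: there is a Borel set Γ ⊆ X × X with γ(Γ) = 1 which is c-cyclically monotone. -/
open MeasureTheory

/-!
Kantorovich duality yields pairs of bounded continuous potentials `(φₙ, ψₙ)` with
`φₙ x + ψₙ y ≤ c (x, y)` whose integrals against `γ` tend to the optimal cost. The gap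
`c - φₙ ⊕ ψₙ` is nonnegative and tends to `0` in `L¹(γ)`, hence `γ`-a.e. along a subsequence; and
wherever `φₙ ⊕ ψₙ → c`, cyclical monotonicity follows because permuting the first coordinates
does not change `∑ᵢ (φₙ xᵢ + ψₙ yᵢ)`.

Duality itself comes from M. Riesz's extension theorem on a compact space: if `a` bounds the
integrals of all separable continuous minorants of `c`, integration against `μ ⊗ ν` on separable
functions extends to a positive functional on `C(K × L, ℝ)` that is at most `a` on *every*
continuous minorant of `c`. The measure representing this functional is a coupling of cost at most
`a`. Standard Borel spaces are then embedded in the Hilbert cube, where the image of a standard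
Borel space is Borel, so that couplings of the image measures come from couplings upstairs.
-/

open Filter Topology TopologicalSpace Equiv
open scoped ENNReal NNReal BoundedContinuousFunction

namespace OptimalTransport

/-- `f` is a minorant of the `[0, ∞]`-valued cost `c`. Since `c ≥ 0`, truncating `f` at `0`
loses nothing. -/
def IsMinorant {Z : Type*} (f : Z → ℝ) (c : Z → ℝ≥0∞) : Prop :=
  ∀ z, ENNReal.ofReal (f z) ≤ c z

theorem IsMinorant.le_toReal {Z : Type*} {f : Z → ℝ} {c : Z → ℝ≥0∞} (h : IsMinorant f c) {z : Z}
    (hz : c z ≠ ⊤) : f z ≤ (c z).toReal :=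
  (ENNReal.ofReal_le_iff_le_toReal hz).1 (h z)

/-- Transport plans between `μ` and `ν`: measures on the product with these marginals. -/
structure IsCoupling {X Y : Type*} [MeasurableSpace X] [MeasurableSpace Y]
    (π : Measure (X × Y)) (μ : Measure X) (ν : Measure Y) : Prop where
  fst_eq : π.fst = μ
  snd_eq : π.snd = ν

/-- Couplings of `μ` and `ν` that minimize the total cost. -/
structure IsOptimalPlan {X Y : Type*} [MeasurableSpace X] [MeasurableSpace Y]
    (c : X × Y → ℝ≥0∞) (μ : Measure X) (ν : Measure Y) (γ : Measure (X × Y)) : Prop where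
  isCoupling : IsCoupling γ μ ν
  lintegral_le : ∀ π, IsCoupling π μ ν → ∫⁻ p, c p ∂γ ≤ ∫⁻ p, c p ∂π

/-- `c`-cyclical monotonicity, stated for arbitrary permutations of the first coordinates rather
than for cyclic shifts only; the two are equivalent by cycle decomposition. -/
def CyclicallyMonotone {X Y : Type*} (c : X × Y → ℝ≥0∞) (Γ : Set (X × Y)) : Prop :=
  ∀ (N : ℕ) (p : Fin N → X × Y), (∀ i, p i ∈ Γ) → ∀ σ : Perm (Fin N),
    ∑ i, c (p i) ≤ ∑ i, c ((p (σ i)).1, (p i).2)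

section CyclicalMonotonicity

theorem cyclicallyMonotone_of_tendsto {X Y ι : Type*} {l : Filter ι} [l.NeBot]
    {c : X × Y → ℝ≥0∞} {Γ : Set (X × Y)} {φ : ι → X → ℝ} {ψ : ι → Y → ℝ}
    (hle : ∀ n, IsMinorant (fun p : X × Y => φ n p.1 + ψ n p.2) c)
    (hfin : ∀ p ∈ Γ, c p ≠ ⊤)
    (hlim : ∀ p ∈ Γ, Tendsto (fun n => φ n p.1 + ψ n p.2) l (𝓝 (c p).toReal)) :
    CyclicallyMonotone c Γ := by
  intro N p hp σ
  by_cases htop : ∃ i, c ((p (σ i)).1, (p i).2) = ⊤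
  · have hsum : ∑ i, c ((p (σ i)).1, (p i).2) = ⊤ := ENNReal.sum_eq_top.2 (by simpa using htop)
    exact hsum ▸ le_top
  push Not at htop
  have hfinp : ∀ i, c (p i) ≠ ⊤ := fun i => hfin _ (hp i)
  rw [← ENNReal.toReal_le_toReal (ENNReal.sum_ne_top.2 fun i _ => hfinp i)
      (ENNReal.sum_ne_top.2 fun i _ => htop i),
    ENNReal.toReal_sum fun i _ => hfinp i, ENNReal.toReal_sum fun i _ => htop i]
  refine le_of_tendsto (tendsto_finsetSum _ fun i _ => hlim _ (hp i)) (.of_forall fun n => ?_)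
  calc ∑ i, (φ n (p i).1 + ψ n (p i).2)
      = ∑ i, (φ n (p (σ i)).1 + ψ n (p i).2) := by
        rw [Finset.sum_add_distrib, Finset.sum_add_distrib,
          Equiv.sum_comp σ fun i => φ n (p i).1]
    _ ≤ ∑ i, (c ((p (σ i)).1, (p i).2)).toReal :=
        Finset.sum_le_sum fun i _ => (hle n).le_toReal (htop i)

theorem CyclicallyMonotone.sum_le_sum_cyclicShift {X Y : Type*} {c : X × Y → ℝ≥0∞}
    {Γ : Set (X × Y)} (hΓ : CyclicallyMonotone c Γ) {N : ℕ} (hN : 0 < N) {p : Fin N → X × Y}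
    (hp : ∀ i, p i ∈ Γ) :
    ∑ i, c (p i) ≤ ∑ i : Fin N, c ((p ⟨(i + 1) % N, Nat.mod_lt _ hN⟩).1, (p i).2) := by
  obtain ⟨n, rfl⟩ := Nat.exists_eq_succ_of_ne_zero hN.ne'
  convert hΓ _ p hp (finRotate _) using 5 with i
  simp only [finRotate_apply, Fin.add_def, Fin.val_one', Nat.add_mod_mod]

end CyclicalMonotonicity

theorem exists_subseq_tendsto_ae_of_tendsto_integral {α : Type*} [MeasurableSpace α]
    {γ : Measure α} {f : ℕ → α → ℝ} {F : α → ℝ} (hf : ∀ n, Integrable (f n) γ)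
    (hF : Integrable F γ) (hle : ∀ n, f n ≤ᵐ[γ] F)
    (hlim : Tendsto (fun n => ∫ x, f n x ∂γ) atTop (𝓝 (∫ x, F x ∂γ))) :
    ∃ ns : ℕ → ℕ, StrictMono ns ∧ ∀ᵐ x ∂γ, Tendsto (fun k => f (ns k) x) atTop (𝓝 (F x)) := by
  have hnorm : ∀ n, eLpNorm (f n - F) 1 γ = ENNReal.ofReal (∫ x, F x ∂γ - ∫ x, f n x ∂γ) := by
    intro n
    rw [eLpNorm_one_eq_lintegral_enorm, ← ofReal_integral_norm_eq_lintegral_enorm ((hf n).sub hF),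
      ← integral_sub hF (hf n)]
    congr 1
    refine integral_congr_ae ?_
    filter_upwards [hle n] with x hx
    rw [Pi.sub_apply, Real.norm_of_nonpos (sub_nonpos.2 hx), neg_sub]
  refine (tendstoInMeasure_of_tendsto_eLpNorm one_ne_zero (fun n => (hf n).1) hF.1
    ?_).exists_seq_tendsto_ae
  simp only [hnorm]
  simpa using ENNReal.tendsto_ofReal (hlim.const_sub (∫ x, F x ∂γ))

section LowerSemicontinuity

variable {Z : Type*} [TopologicalSpace Z] {c : Z → ℝ≥0∞}

theorem exists_continuousMap_le_eq_of_lt [CompletelyRegularSpace Z] (hc : LowerSemicontinuous c)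
    {z : Z} {s : ℝ≥0} (hs : s < c z) : ∃ f : C(Z, ℝ≥0), (∀ w, (f w : ℝ≥0∞) ≤ c w) ∧ f z = s := by
  obtain ⟨g, hg, hgz, hgc⟩ := CompletelyRegularSpace.completely_regular_isOpen z
    {w | s < c w} (hc.isOpen_preimage s) hs
  refine ⟨⟨fun w => s * unitInterval.toNNReal (unitInterval.symm (g w)), by fun_prop⟩,
    fun w => ?_, by simp [hgz]⟩
  by_cases hw : s < c w
  · have h_one : unitInterval.toNNReal (unitInterval.symm (g w)) ≤ 1 :=
      (unitInterval.symm (g w)).2.2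
    exact (ENNReal.coe_le_coe.2 (mul_le_of_le_one_right' h_one)).trans hw.le
  · simp [hgc hw]

theorem exists_monotone_continuousMap_iSup_eq [CompletelyRegularSpace Z]
    [SecondCountableTopology Z] (hc : LowerSemicontinuous c) :
    ∃ f : ℕ → C(Z, ℝ≥0), Monotone f ∧ ∀ z, ⨆ n, (f n z : ℝ≥0∞) = c z := by
  let toFun (f : C(Z, ℝ≥0)) (z : Z) : ℝ≥0∞ := f z
  let 𝓕 : Set (Z → ℝ≥0∞) := toFun '' {f | toFun f ≤ c}
  have h_lsc : ∀ g ∈ 𝓕, LowerSemicontinuous g := by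
    rintro _ ⟨f, -, rfl⟩
    exact (ENNReal.continuous_coe.comp f.continuous).lowerSemicontinuous
  have h_lub : IsLUB 𝓕 c := by
    refine ⟨by rintro _ ⟨f, hf, rfl⟩; exact hf, fun b hb z => ?_⟩
    refine ENNReal.le_of_forall_nnreal_lt fun s hs => ?_
    obtain ⟨f, hfc, rfl⟩ := exists_continuousMap_le_eq_of_lt hc hs
    exact hb ⟨f, hfc, rfl⟩ z
  obtain ⟨𝓖, h𝓖𝓕, h𝓖_count, h𝓖_lub⟩ := exists_countable_lowerSemicontinuous_isLUB h_lsc h_lub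
  have h𝓖_insert : insert 0 𝓖 ⊆ 𝓕 := Set.insert_subset ⟨0, fun z => zero_le, rfl⟩ h𝓖𝓕
  obtain ⟨g, hg⟩ := (h𝓖_count.insert 0).exists_eq_range (Set.insert_nonempty _ _)
  have hg_lub : IsLUB (Set.range g) c :=
    hg ▸ h𝓖_lub.of_subset_of_superset h_lub (Set.subset_insert _ _) h𝓖_insert
  choose f hfc hfg using fun n => h𝓖_insert (hg ▸ Set.mem_range_self n)
  refine ⟨partialSups f, (partialSups f).monotone, fun z => le_antisymm (iSup_le fun n => ?_) ?_⟩
  · have h_sup : ∀ {f₁ f₂}, toFun (f₁ ⊔ f₂) ≤ c ↔ toFun f₁ ≤ c ∧ toFun f₂ ≤ c := by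
      simp [toFun, Pi.le_def, forall_and]
    exact (partialSups_iff_forall (toFun · ≤ c) h_sup).2 (fun n _ => hfc n) z
  · have h_upper : (fun z => ⨆ n, (partialSups f n z : ℝ≥0∞)) ∈ upperBounds (Set.range g) := by
      rintro _ ⟨n, rfl⟩ w
      rw [← hfg n]
      exact le_iSup_of_le n (ENNReal.coe_le_coe.2 (le_partialSups f n w))
    exact hg_lub.2 h_upper z

theorem lintegral_le_of_forall_continuousMap_le [CompletelyRegularSpace Z]
    [SecondCountableTopology Z] [MeasurableSpace Z] [OpensMeasurableSpace Z]
    (hc : LowerSemicontinuous c) {m : Measure Z} {a : ℝ≥0∞}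
    (h : ∀ f : C(Z, ℝ≥0), (∀ z, (f z : ℝ≥0∞) ≤ c z) → ∫⁻ z, f z ∂m ≤ a) :
    ∫⁻ z, c z ∂m ≤ a := by
  obtain ⟨f, hf_mono, hf_sup⟩ := exists_monotone_continuousMap_iSup_eq hc
  simp_rw [← hf_sup] at h ⊢
  rw [lintegral_iSup (fun n => (f n).continuous.measurable.coe_nnreal_ennreal)
    fun n n' hn z => ENNReal.coe_le_coe.2 (hf_mono hn z)]
  exact iSup_le fun n => h (f n) fun z => le_iSup (fun k => (f k z : ℝ≥0∞)) n

end LowerSemicontinuity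

/-- The largest lower semicontinuous function on `W` whose composition with `e` is at most `c`; it
is `∞` off the closure of the range of `e`. -/
noncomputable def lscExtension {Z W : Type*} [TopologicalSpace W] (e : Z → W)
    (c : Z → ℝ≥0∞) (w : W) : ℝ≥0∞ :=
  liminf c (comap e (𝓝 w))

theorem lowerSemicontinuous_lscExtension {Z W : Type*} [TopologicalSpace W] (e : Z → W)
    (c : Z → ℝ≥0∞) :
    LowerSemicontinuous (lscExtension e c) := by
  intro w t ht
  obtain ⟨s, hts, hs⟩ := exists_between ht
  have hev : ∀ᶠ w' in 𝓝 w, ∀ z, e z = w' → s < c z :=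
    eventually_comap.1 (eventually_lt_of_lt_liminf hs)
  filter_upwards [hev.eventually_nhds] with w' hw'
  exact hts.trans_le (le_liminf_of_le (by isBoundedDefault)
    ((eventually_comap.2 hw').mono fun _ => le_of_lt))

theorem lscExtension_apply_of_isInducing {Z W : Type*} [TopologicalSpace Z] [TopologicalSpace W]
    {e : Z → W} {c : Z → ℝ≥0∞} (he : IsInducing e)
    (hc : LowerSemicontinuous c) (z : Z) : lscExtension e c (e z) = c z := by
  rw [lscExtension, ← he.nhds_eq_comap]
  refine le_antisymm ?_ (lowerSemicontinuousAt_iff_le_liminf.1 (hc z))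
  exact (liminf_le_liminf_of_le (pure_le_nhds z)).trans (by simp [liminf, limsInf])

section Duality

/-- The pairs `(f, t)` such that `-f` is a minorant of `t • c`. Extending `(f, t) ↦ I f + a * t`
nonnegatively on this cone is what bounds the extension of `I` by `a` on minorants of `c`. -/
def minorantCone {Z : Type*} [TopologicalSpace Z] (c : Z → ℝ≥0∞) :
    PointedCone ℝ (C(Z, ℝ) × ℝ) where
  carrier := {q | 0 ≤ q.2 ∧ ∀ z, ENNReal.ofReal (-q.1 z) ≤ ENNReal.ofReal q.2 * c z}
  zero_mem' := by simp
  add_mem' := by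
    rintro ⟨f, t⟩ ⟨g, s⟩ ⟨ht, hf⟩ ⟨hs, hg⟩
    refine ⟨add_nonneg ht hs, fun z => ?_⟩
    calc ENNReal.ofReal (-(f z + g z))
        ≤ ENNReal.ofReal (-f z) + ENNReal.ofReal (-g z) := by
          rw [neg_add]; exact ENNReal.ofReal_add_le
      _ ≤ ENNReal.ofReal t * c z + ENNReal.ofReal s * c z := add_le_add (hf z) (hg z)
      _ = ENNReal.ofReal (t + s) * c z := by rw [ENNReal.ofReal_add ht hs, add_mul]
  smul_mem' := by
    rintro ⟨r, hr⟩ ⟨f, t⟩ ⟨ht, hf⟩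
    refine ⟨mul_nonneg hr ht, fun z => ?_⟩
    calc ENNReal.ofReal (-(r * f z))
        = ENNReal.ofReal r * ENNReal.ofReal (-f z) := by rw [← mul_neg, ENNReal.ofReal_mul hr]
      _ ≤ ENNReal.ofReal r * (ENNReal.ofReal t * c z) := by gcongr; exact hf z
      _ = ENNReal.ofReal (r * t) * c z := by rw [ENNReal.ofReal_mul hr, mul_assoc]

theorem nonneg_of_mem_minorantCone {Z : Type*} [TopologicalSpace Z] {c : Z → ℝ≥0∞}
    {S : Submodule ℝ C(Z, ℝ)} {I : C(Z, ℝ) →ₚ[ℝ] ℝ} {a : ℝ}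
    (h : ∀ f ∈ S, IsMinorant f c → I f ≤ a) {f : C(Z, ℝ)} (hfS : f ∈ S) {t : ℝ}
    (hft : (f, t) ∈ minorantCone c) : 0 ≤ I f + a * t := by
  obtain ⟨ht, hf⟩ := hft
  obtain rfl | ht_pos := eq_or_lt_of_le ht
  · have hf_nonneg : 0 ≤ f := fun z => by simpa using hf z
    simpa using I.map_nonneg hf_nonneg
  have h_minorant : IsMinorant (-(t⁻¹ • f) : C(Z, ℝ)) c := fun z => by
    calc ENNReal.ofReal (-(t⁻¹ * f z))
        = ENNReal.ofReal t⁻¹ * ENNReal.ofReal (-f z) := by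
          rw [← mul_neg, ENNReal.ofReal_mul (inv_nonneg.2 ht)]
      _ ≤ ENNReal.ofReal t⁻¹ * (ENNReal.ofReal t * c z) := by gcongr; exact hf z
      _ = c z := by
          rw [← mul_assoc, ← ENNReal.ofReal_mul (inv_nonneg.2 ht), inv_mul_cancel₀ ht_pos.ne',
            ENNReal.ofReal_one, one_mul]
  have h_le : -(t⁻¹ * I f) ≤ a := by
    simpa using h _ (S.neg_mem (S.smul_mem t⁻¹ hfS)) h_minorant
  have h_scaled := mul_le_mul_of_nonneg_left h_le ht
  rw [mul_neg, mul_inv_cancel_left₀ ht_pos.ne'] at h_scaled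
  linarith

theorem exists_positive_extension_le_of_isMinorant {Z : Type*} [TopologicalSpace Z]
    [CompactSpace Z] {c : Z → ℝ≥0∞} {S : Submodule ℝ C(Z, ℝ)} (hS : 1 ∈ S)
    (I : C(Z, ℝ) →ₚ[ℝ] ℝ) {a : ℝ} (h : ∀ f ∈ S, IsMinorant f c → I f ≤ a) :
    ∃ Λ : C(Z, ℝ) →ₚ[ℝ] ℝ, (∀ f ∈ S, Λ f = I f) ∧ ∀ f : C(Z, ℝ), IsMinorant f c → Λ f ≤ a := by
  let J : C(Z, ℝ) × ℝ →ₗ[ℝ] ℝ := I.toLinearMap.coprod (LinearMap.lsmul ℝ ℝ a)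
  have hJ : ∀ f t, J (f, t) = I f + a * t := fun f t => rfl
  have h_dense : ∀ q, ∃ x : (J.toPMap (S.prod ⊤)).domain,
      (x : C(Z, ℝ) × ℝ) + q ∈ minorantCone c := by
    rintro ⟨f, t⟩
    refine ⟨⟨(‖f‖ • 1, -t), S.smul_mem _ hS, trivial⟩, by simp, fun z => ?_⟩
    have h_norm := f.neg_norm_le_apply z
    simpa [ENNReal.ofReal_eq_zero] using by linarith
  obtain ⟨F, hF_eq, hF_nonneg⟩ := riesz_extension (minorantCone c) (J.toPMap (S.prod ⊤))
    (fun x hx => nonneg_of_mem_minorantCone h x.2.1 hx) h_dense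
  have hF_snd : ∀ t, F (0, t) = a * t := fun t => by
    simpa [hJ] using hF_eq ⟨(0, t), S.zero_mem, trivial⟩
  refine ⟨.mk₀ (F ∘ₗ LinearMap.inl ℝ _ _) fun f hf => hF_nonneg (f, 0) ⟨le_rfl, fun z => ?_⟩,
    fun f hf => ?_, fun f hf => ?_⟩
  · simpa using hf z
  · exact (hF_eq ⟨(f, 0), hf, trivial⟩).trans (by simp [hJ])
  · have h_mem : (-f, (1 : ℝ)) ∈ minorantCone c := ⟨zero_le_one, fun z => by simpa using hf z⟩
    have h_le := hF_nonneg _ h_mem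
    rw [show (-f, (1 : ℝ)) = (0, 1) - (f, 0) by simp, map_sub, hF_snd] at h_le
    change F (f, 0) ≤ a
    linarith

theorem exists_integral_eq_of_positive {Z : Type*} [TopologicalSpace Z] [CompactSpace Z] [T2Space Z]
    [MeasurableSpace Z] [BorelSpace Z] (Λ : C(Z, ℝ) →ₚ[ℝ] ℝ) :
    ∃ m : Measure Z, IsFiniteMeasure m ∧ ∀ f : C(Z, ℝ), ∫ z, f z ∂m = Λ f := by
  let Λc : CompactlySupportedContinuousMap Z ℝ →ₚ[ℝ] ℝ := .mk₀
    { toFun := fun f => Λ f.toContinuousMap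
      map_add' := fun f g => map_add Λ f.toContinuousMap g.toContinuousMap
      map_smul' := fun r f => map_smul Λ r f.toContinuousMap }
    fun f hf => Λ.map_nonneg hf
  exact ⟨RealRMK.rieszMeasure Λc, inferInstance, fun f => RealRMK.integral_rieszMeasure Λc
    (CompactlySupportedContinuousMap.continuousMapEquiv f)⟩

theorem exists_measure_lintegral_le_of_isMinorant {Z : Type*} [TopologicalSpace Z]
    [CompactSpace Z] [T2Space Z] [SecondCountableTopology Z] [MeasurableSpace Z] [BorelSpace Z]
    {c : Z → ℝ≥0∞} (hc : LowerSemicontinuous c) {S : Submodule ℝ C(Z, ℝ)} (hS : 1 ∈ S)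
    {P : Measure Z} [IsFiniteMeasure P] {a : ℝ}
    (h : ∀ f ∈ S, IsMinorant f c → ∫ z, f z ∂P ≤ a) :
    ∃ m : Measure Z, IsFiniteMeasure m ∧ (∀ f ∈ S, ∫ z, f z ∂m = ∫ z, f z ∂P) ∧
      ∫⁻ z, c z ∂m ≤ ENNReal.ofReal a := by
  have h_int : ∀ f : C(Z, ℝ), Integrable f P := fun f =>
    f.continuous.integrable_of_hasCompactSupport (.of_compactSpace f)
  let I : C(Z, ℝ) →ₚ[ℝ] ℝ := .mk₀
    { toFun := fun f => ∫ z, f z ∂P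
      map_add' := fun f g => integral_add (h_int f) (h_int g)
      map_smul' := fun r f => integral_const_mul r f }
    fun f hf => integral_nonneg hf
  obtain ⟨Λ, hΛ_eq, hΛ_le⟩ := exists_positive_extension_le_of_isMinorant hS I h
  obtain ⟨m, hm_fin, hm⟩ := exists_integral_eq_of_positive Λ
  refine ⟨m, hm_fin, fun f hf => (hm f).trans (hΛ_eq f hf),
    lintegral_le_of_forall_continuousMap_le hc fun f hf => ?_⟩
  let g : C(Z, ℝ) := ⟨fun z => f z, by fun_prop⟩
  have hg_int : Integrable g m :=
    g.continuous.integrable_of_hasCompactSupport (.of_compactSpace g)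
  rw [lintegral_coe_eq_integral _ hg_int]
  exact ENNReal.ofReal_le_ofReal ((hm g).trans_le (hΛ_le g fun z => by simpa [g] using hf z))

end Duality

section Coupling

variable {X Y : Type*} [MeasurableSpace X] [MeasurableSpace Y] {μ : Measure X} {ν : Measure Y}
  {π : Measure (X × Y)}

theorem IsCoupling.isProbabilityMeasure [IsProbabilityMeasure μ] (h : IsCoupling π μ ν) :
    IsProbabilityMeasure π :=
  ⟨by rw [← Measure.fst_univ, h.fst_eq, measure_univ]⟩

theorem isCoupling_prod [IsProbabilityMeasure μ] [IsProbabilityMeasure ν] :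
    IsCoupling (μ.prod ν) μ ν :=
  ⟨Measure.fst_prod, Measure.snd_prod⟩

theorem IsCoupling.integrable_add (h : IsCoupling π μ ν) {φ : X → ℝ} {ψ : Y → ℝ}
    (hφ : Integrable φ μ) (hψ : Integrable ψ ν) :
    Integrable (fun p : X × Y => φ p.1 + ψ p.2) π := by
  obtain ⟨rfl, rfl⟩ := h
  exact (hφ.comp_measurable measurable_fst).add (hψ.comp_measurable measurable_snd)

theorem IsCoupling.integral_add (h : IsCoupling π μ ν) {φ : X → ℝ} {ψ : Y → ℝ}
    (hφ : Integrable φ μ) (hψ : Integrable ψ ν) :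
    ∫ p : X × Y, (φ p.1 + ψ p.2) ∂π = ∫ x, φ x ∂μ + ∫ y, ψ y ∂ν := by
  obtain ⟨rfl, rfl⟩ := h
  rw [Measure.fst, integral_map measurable_fst.aemeasurable hφ.1, Measure.snd,
    integral_map measurable_snd.aemeasurable hψ.1]
  exact MeasureTheory.integral_add (hφ.comp_measurable measurable_fst)
    (hψ.comp_measurable measurable_snd)

theorem IsCoupling.exists_map_prodMap_eq {X' Y' : Type*} [MeasurableSpace X'] [MeasurableSpace Y']
    {e₁ : X → X'} {e₂ : Y → Y'} (he₁ : MeasurableEmbedding e₁) (he₂ : MeasurableEmbedding e₂)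
    {ρ : Measure (X' × Y')} (h : IsCoupling ρ (μ.map e₁) (ν.map e₂)) :
    ∃ π, IsCoupling π μ ν ∧ π.map (Prod.map e₁ e₂) = ρ := by
  have he := he₁.prodMap he₂
  have h_fst : ∀ᵐ z ∂ρ, z.1 ∈ Set.range e₁ :=
    ae_of_ae_map measurable_fst.aemeasurable <| by
      rw [← Measure.fst, h.fst_eq, he₁.ae_map_iff]
      exact .of_forall Set.mem_range_self
  have h_snd : ∀ᵐ z ∂ρ, z.2 ∈ Set.range e₂ :=
    ae_of_ae_map measurable_snd.aemeasurable <| by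
      rw [← Measure.snd, h.snd_eq, he₂.ae_map_iff]
      exact .of_forall Set.mem_range_self
  obtain ⟨π, rfl⟩ : ∃ π : Measure (X × Y), π.map (Prod.map e₁ e₂) = ρ := by
    refine ⟨ρ.comap (Prod.map e₁ e₂), ?_⟩
    rw [he.map_comap, Set.range_prodMap, Measure.restrict_eq_self_of_ae_mem]
    exact h_fst.and h_snd
  refine ⟨π, ⟨he₁.map_injective ?_, he₂.map_injective ?_⟩, rfl⟩
  · rw [← h.fst_eq, Measure.fst, Measure.fst, Measure.map_map he₁.measurable measurable_fst,
      Measure.map_map measurable_fst he.measurable, Prod.map_fst']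
  · rw [← h.snd_eq, Measure.snd, Measure.snd, Measure.map_map he₂.measurable measurable_snd,
      Measure.map_map measurable_snd he.measurable, Prod.map_snd']

end Coupling

section Kantorovich

theorem isCoupling_of_forall_integral_eq {X Y : Type*} [TopologicalSpace X] [TopologicalSpace Y]
    [HasOuterApproxClosed X] [HasOuterApproxClosed Y] [MeasurableSpace X] [MeasurableSpace Y]
    [BorelSpace X] [BorelSpace Y] {μ : Measure X} {ν : Measure Y} {π : Measure (X × Y)}
    [IsFiniteMeasure μ] [IsFiniteMeasure ν] [IsFiniteMeasure π]
    (hμ : ∀ φ : X →ᵇ ℝ, ∫ p, φ p.1 ∂π = ∫ x, φ x ∂μ)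
    (hν : ∀ ψ : Y →ᵇ ℝ, ∫ p, ψ p.2 ∂π = ∫ y, ψ y ∂ν) : IsCoupling π μ ν where
  fst_eq := ext_of_forall_integral_eq_of_IsFiniteMeasure fun φ => by
    rw [Measure.fst, integral_map measurable_fst.aemeasurable
      φ.continuous.measurable.aestronglyMeasurable, hμ]
  snd_eq := ext_of_forall_integral_eq_of_IsFiniteMeasure fun ψ => by
    rw [Measure.snd, integral_map measurable_snd.aemeasurable
      ψ.continuous.measurable.aestronglyMeasurable, hν]

theorem exists_isCoupling_lintegral_le_of_compactSpace {K L : Type*}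
    [TopologicalSpace K] [CompactSpace K] [T2Space K] [SecondCountableTopology K]
    [MeasurableSpace K] [BorelSpace K]
    [TopologicalSpace L] [CompactSpace L] [T2Space L] [SecondCountableTopology L]
    [MeasurableSpace L] [BorelSpace L]
    {μ : Measure K} {ν : Measure L} [IsProbabilityMeasure μ] [IsProbabilityMeasure ν]
    {c : K × L → ℝ≥0∞} (hc : LowerSemicontinuous c) {a : ℝ}
    (h : ∀ (φ : C(K, ℝ)) (ψ : C(L, ℝ)), IsMinorant (fun p : K × L => φ p.1 + ψ p.2) c →
      ∫ x, φ x ∂μ + ∫ y, ψ y ∂ν ≤ a) :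
    ∃ π, IsCoupling π μ ν ∧ ∫⁻ p, c p ∂π ≤ ENNReal.ofReal a := by
  have hφ_int : ∀ φ : C(K, ℝ), Integrable φ μ := fun φ =>
    φ.continuous.integrable_of_hasCompactSupport (.of_compactSpace φ)
  have hψ_int : ∀ ψ : C(L, ℝ), Integrable ψ ν := fun ψ =>
    ψ.continuous.integrable_of_hasCompactSupport (.of_compactSpace ψ)
  let sum : C(K, ℝ) × C(L, ℝ) →ₗ[ℝ] C(K × L, ℝ) :=
    (ContinuousMap.compRightAlgHom ℝ ℝ ContinuousMap.fst).toLinearMap.coprod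
      (ContinuousMap.compRightAlgHom ℝ ℝ ContinuousMap.snd).toLinearMap
  have h_integral : ∀ φ ψ, ∫ p, sum (φ, ψ) p ∂μ.prod ν = ∫ x, φ x ∂μ + ∫ y, ψ y ∂ν := fun φ ψ =>
    isCoupling_prod.integral_add (hφ_int φ) (hψ_int ψ)
  have h_one : 1 ∈ LinearMap.range sum := ⟨(1, 0), by ext; simp [sum]⟩
  obtain ⟨π, hπ_fin, hπ_eq, hπ_le⟩ := exists_measure_lintegral_le_of_isMinorant hc h_one
    (P := μ.prod ν) (a := a) <| by
      rintro _ ⟨⟨φ, ψ⟩, rfl⟩ h_minorant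
      exact (h_integral φ ψ).trans_le (h φ ψ h_minorant)
  have hπ_integral : ∀ (φ : C(K, ℝ)) (ψ : C(L, ℝ)),
      ∫ p : K × L, (φ p.1 + ψ p.2) ∂π = ∫ x, φ x ∂μ + ∫ y, ψ y ∂ν := fun φ ψ =>
    (hπ_eq _ ⟨(φ, ψ), rfl⟩).trans (h_integral φ ψ)
  exact ⟨π, isCoupling_of_forall_integral_eq
    (fun φ => by simpa using hπ_integral φ.toContinuousMap 0)
    (fun ψ => by simpa using hπ_integral 0 ψ.toContinuousMap), hπ_le⟩

theorem exists_isEmbedding_measurableEmbedding_hilbertCube (X : Type*) [TopologicalSpace X]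
    [MetrizableSpace X] [SecondCountableTopology X] [MeasurableSpace X] [BorelSpace X]
    [StandardBorelSpace X] :
    ∃ e : X → ℕ → unitInterval, IsEmbedding e ∧ MeasurableEmbedding e := by
  let := metrizableSpaceMetric X
  obtain ⟨e, he⟩ := Metric.PiNatEmbed.exists_embedding_to_hilbert_cube (X := X)
  exact ⟨e, he, he.continuous.measurable.measurableEmbedding he.injective⟩

variable {X Y : Type*} [TopologicalSpace X] [MetrizableSpace X] [SecondCountableTopology X]
  [MeasurableSpace X] [BorelSpace X] [StandardBorelSpace X]
  [TopologicalSpace Y] [MetrizableSpace Y] [SecondCountableTopology Y]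
  [MeasurableSpace Y] [BorelSpace Y] [StandardBorelSpace Y]
  {μ : Measure X} {ν : Measure Y} [IsProbabilityMeasure μ] [IsProbabilityMeasure ν]
  {c : X × Y → ℝ≥0∞}

theorem exists_isCoupling_lintegral_le (hc : LowerSemicontinuous c) {a : ℝ}
    (h : ∀ (φ : X →ᵇ ℝ) (ψ : Y →ᵇ ℝ), IsMinorant (fun p : X × Y => φ p.1 + ψ p.2) c →
      ∫ x, φ x ∂μ + ∫ y, ψ y ∂ν ≤ a) :
    ∃ π, IsCoupling π μ ν ∧ ∫⁻ p, c p ∂π ≤ ENNReal.ofReal a := by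
  obtain ⟨e₁, he₁, he₁_meas⟩ := exists_isEmbedding_measurableEmbedding_hilbertCube X
  obtain ⟨e₂, he₂, he₂_meas⟩ := exists_isEmbedding_measurableEmbedding_hilbertCube Y
  have := Measure.isProbabilityMeasure_map he₁_meas.measurable.aemeasurable (μ := μ)
  have := Measure.isProbabilityMeasure_map he₂_meas.measurable.aemeasurable (μ := ν)
  let C := lscExtension (Prod.map e₁ e₂) c
  have hC_apply : ∀ p, C (Prod.map e₁ e₂ p) = c p :=
    lscExtension_apply_of_isInducing (he₁.prodMap he₂).isInducing hc
  have hC_dual : ∀ (φ ψ : C(ℕ → unitInterval, ℝ)), IsMinorant (fun p => φ p.1 + ψ p.2) C →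
      ∫ x, φ x ∂μ.map e₁ + ∫ y, ψ y ∂ν.map e₂ ≤ a := fun φ ψ hφψ => by
    rw [he₁_meas.integral_map, he₂_meas.integral_map]
    exact h ((BoundedContinuousFunction.mkOfCompact φ).compContinuous ⟨e₁, he₁.continuous⟩)
      ((BoundedContinuousFunction.mkOfCompact ψ).compContinuous ⟨e₂, he₂.continuous⟩)
      fun p => (hφψ _).trans_eq (hC_apply p)
  obtain ⟨ρ, hρ, hρ_le⟩ := exists_isCoupling_lintegral_le_of_compactSpace
    (lowerSemicontinuous_lscExtension (Prod.map e₁ e₂) c) hC_dual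
  obtain ⟨π, hπ, rfl⟩ := hρ.exists_map_prodMap_eq he₁_meas he₂_meas
  refine ⟨π, hπ, le_of_eq_of_le ?_ hρ_le⟩
  rw [(he₁_meas.prodMap he₂_meas).lintegral_map]
  exact lintegral_congr fun p => (hC_apply p).symm

theorem IsOptimalPlan.exists_isMinorant_lt_integral {γ : Measure (X × Y)}
    (hγ : IsOptimalPlan c μ ν γ) (hc : LowerSemicontinuous c) (hfin : ∫⁻ p, c p ∂γ ≠ ⊤) {t : ℝ}
    (ht : t < (∫⁻ p, c p ∂γ).toReal) :
    ∃ (φ : X →ᵇ ℝ) (ψ : Y →ᵇ ℝ), IsMinorant (fun p : X × Y => φ p.1 + ψ p.2) c ∧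
      t < ∫ p, (φ p.1 + ψ p.2) ∂γ := by
  by_contra! h
  have ht_nonneg : 0 ≤ t := by simpa using h 0 0 fun p => by simp
  have h_dual : ∀ (φ : X →ᵇ ℝ) (ψ : Y →ᵇ ℝ), IsMinorant (fun p : X × Y => φ p.1 + ψ p.2) c →
      ∫ x, φ x ∂μ + ∫ y, ψ y ∂ν ≤ t := fun φ ψ hφψ =>
    (hγ.isCoupling.integral_add (φ.integrable μ) (ψ.integrable ν)).ge.trans (h φ ψ hφψ)
  obtain ⟨π, hπ, hπ_le⟩ := exists_isCoupling_lintegral_le hc h_dual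
  exact ((hγ.lintegral_le π hπ).trans hπ_le).not_gt
    ((ENNReal.ofReal_lt_iff_lt_toReal ht_nonneg hfin).2 ht)

end Kantorovich

end OptimalTransport

open OptimalTransport

theorem stmt_1_general {X Y : Type*}
    [TopologicalSpace X] [MetrizableSpace X] [SecondCountableTopology X]
    [MeasurableSpace X] [BorelSpace X] [StandardBorelSpace X]
    [TopologicalSpace Y] [MetrizableSpace Y] [SecondCountableTopology Y]
    [MeasurableSpace Y] [BorelSpace Y] [StandardBorelSpace Y]
    {μ : Measure X} {ν : Measure Y} [IsProbabilityMeasure μ] [IsProbabilityMeasure ν]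
    {c : X × Y → ℝ≥0∞} (hc : LowerSemicontinuous c) {γ : Measure (X × Y)}
    (hγ : IsOptimalPlan c μ ν γ) (hfin : ∫⁻ p, c p ∂γ ≠ ⊤) :
    ∃ Γ : Set (X × Y), MeasurableSet Γ ∧ γ Γ = 1 ∧ CyclicallyMonotone c Γ := by
  have := hγ.isCoupling.isProbabilityMeasure
  obtain ⟨t, -, ht_lt, ht_lim⟩ := exists_seq_strictMono_tendsto (∫⁻ p, c p ∂γ).toReal
  choose φ ψ h_minorant h_lt using fun n => hγ.exists_isMinorant_lt_integral hc hfin (ht_lt n)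
  have hc_fin : ∀ᵐ p ∂γ, c p < ⊤ := ae_lt_top hc.measurable hfin
  have hc_int : Integrable (fun p => (c p).toReal) γ :=
    integrable_toReal_of_lintegral_ne_top hc.measurable.aemeasurable hfin
  have h_int : ∀ n, Integrable (fun p : X × Y => φ n p.1 + ψ n p.2) γ := fun n =>
    hγ.isCoupling.integrable_add ((φ n).integrable μ) ((ψ n).integrable ν)
  have h_le : ∀ n, (fun p : X × Y => φ n p.1 + ψ n p.2) ≤ᵐ[γ] fun p => (c p).toReal := fun n =>
    hc_fin.mono fun p hp => (h_minorant n).le_toReal hp.ne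
  rw [← integral_toReal hc.measurable.aemeasurable hc_fin] at ht_lim
  have h_lim := tendsto_of_tendsto_of_tendsto_of_le_of_le ht_lim tendsto_const_nhds
    (fun n => (h_lt n).le) fun n => integral_mono_ae (h_int n) hc_int (h_le n)
  obtain ⟨ns, -, h_ae⟩ := exists_subseq_tendsto_ae_of_tendsto_integral h_int hc_int h_le h_lim
  obtain ⟨Γ, hΓ_ae, hΓ_meas, hΓ⟩ := (hc_fin.and h_ae).exists_measurable_mem
  exact ⟨Γ, hΓ_meas, (prob_compl_eq_zero_iff hΓ_meas).1 hΓ_ae, cyclicallyMonotone_of_tendsto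
    (fun k => h_minorant (ns k)) (fun p hp => (hΓ p hp).1.ne) fun p hp => (hΓ p hp).2⟩

theorem stmt_1 {X : Type*} [MetricSpace X] [CompleteSpace X]
    [TopologicalSpace.SeparableSpace X] [MeasurableSpace X] [BorelSpace X]
    (μ ν : Measure X) [IsProbabilityMeasure μ] [IsProbabilityMeasure ν]
    (c : X × X → ENNReal) (hc : LowerSemicontinuous c)
    (γ : Measure (X × X)) [IsProbabilityMeasure γ]
    (hγ₁ : γ.map Prod.fst = μ) (hγ₂ : γ.map Prod.snd = ν)
    (hopt : ∀ γ' : Measure (X × X), IsProbabilityMeasure γ' →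
      γ'.map Prod.fst = μ → γ'.map Prod.snd = ν →
      ∫⁻ p, c p ∂γ ≤ ∫⁻ p, c p ∂γ')
    (hfin : ∫⁻ p, c p ∂γ < ⊤) :
    ∃ Γ : Set (X × X), MeasurableSet Γ ∧ γ Γ = 1 ∧
      ∀ (N : ℕ) (hN : 2 ≤ N), ∀ p : Fin N → X × X, (∀ i, p i ∈ Γ) →
        ∑ i, c (p i) ≤
          ∑ i : Fin N, c ((p ⟨(i.1 + 1) % N, Nat.mod_lt _ (Nat.lt_of_lt_of_le Nat.zero_lt_two hN)⟩).1, (p i).2) := by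
  have := UniformSpace.secondCountable_of_separable X
  have hγ : IsOptimalPlan c μ ν γ :=
    ⟨⟨hγ₁, hγ₂⟩, fun π hπ => hopt π hπ.isProbabilityMeasure hπ.fst_eq hπ.snd_eq⟩
  obtain ⟨Γ, hΓ_meas, hΓ_one, hΓ⟩ := stmt_1_general hc hγ hfin.ne
  exact ⟨Γ, hΓ_meas, hΓ_one, fun N hN p hp => hΓ.sum_le_sum_cyclicShift (by omega) hp⟩
end

section
/- Let X be a complete separable metric space with distance d and let μ, ν be compactly supported Borel probability measures on X. Then there exists a 1-Lipschitz function u : X → ℝ such that (a) ∫ u dμ − ∫ u dν = inf over γ ∈ Π(μ,ν) of ∫ d(x,y) dγ(x,y), and (b) a transport plan γ ∈ Π(μ,ν) attains this infimum if and only if u(x) − u(y) = d(x,y) for γ-almost every (x,y). -/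
open MeasureTheory

/-!
Optimal potentials are found in duality with optimal plans. On a compact space, the least value
of `∫ φ dμ + ∫ ψ dν` over continuous `φ`, `ψ` with `h x y ≤ φ x + ψ y` is a sublinear function of
`h`. By Hahn-Banach some linear functional below it touches it at `h = -d`; such a functional is
positive, hence a measure by Riesz-Markov-Kakutani, and testing it on `φ x` and `ψ y` shows that
the measure is a coupling. A pair with `-d(x, y) ≤ φ x + ψ y` can be traded for a single
1-Lipschitz `u` with `-φ ≤ u ≤ ψ`, and by Arzelà-Ascoli some such `u` maximizes
`∫ u dμ - ∫ u dν`. Finally `u x - u y ≤ d(x, y)` everywhere, so a plan is optimal exactly when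
equality holds almost everywhere.
-/

open Set
open scoped BoundedContinuousFunction CompactlySupported NNReal

section Lipschitz

variable {X : Type*} [PseudoMetricSpace X]

theorem exists_lipschitzWith_between (C : ℝ≥0) {f g : X → ℝ}
    (hfg : ∀ x y, f x ≤ g y + C * dist x y) :
    ∃ u : X → ℝ, LipschitzWith C u ∧ f ≤ u ∧ u ≤ g := by
  have hbdd (x : X) : BddBelow (range fun y ↦ g y + C * dist x y) :=
    ⟨f x, forall_mem_range.2 (hfg x)⟩
  refine ⟨fun x ↦ ⨅ y, (g y + C * dist x y), .of_le_add_mul C fun x z ↦ ?_, fun x ↦ ?_, fun x ↦ ?_⟩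
  · have : Nonempty X := ⟨x⟩
    rw [← sub_le_iff_le_add]
    refine le_ciInf fun y ↦ sub_le_iff_le_add.2 ?_
    calc
      ⨅ y, (g y + C * dist x y) ≤ g y + C * dist x y := ciInf_le (hbdd x) y
      _ ≤ g y + C * (dist x z + dist z y) := by gcongr; exact dist_triangle x z y
      _ = g y + C * dist z y + C * dist x z := by ring
  · have : Nonempty X := ⟨x⟩
    exact le_ciInf (hfg x)
  · exact (ciInf_le (hbdd x) x).trans_eq (by simp)

theorem exists_lipschitzWith_extension {C : ℝ≥0} {s : Set X} {f : s → ℝ}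
    (hf : LipschitzWith C f) : ∃ u : X → ℝ, LipschitzWith C u ∧ ∀ x : s, u x = f x := by
  have hext (x : s) : Function.extend ((↑) : s → X) f 0 x = f x :=
    Subtype.val_injective.extend_apply f 0 x
  have hf_ext : LipschitzOnWith C (Function.extend ((↑) : s → X) f 0) s :=
    lipschitzOnWith_iff_restrict.2 <| by
      rwa [show s.domRestrict (Function.extend ((↑) : s → X) f 0) = f from funext hext]
  obtain ⟨u, hu, hu_eq⟩ := hf_ext.extend_real
  exact ⟨u, hu, fun x ↦ (hu_eq x.2).symm.trans (hext x)⟩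

theorem isCompact_setOf_lipschitzWith_apply_eq_zero (C : ℝ≥0) (x₀ : X) :
    IsCompact {u : C(X, ℝ) | LipschitzWith C u ∧ u x₀ = 0} := by
  refine ArzelaAscoli.isCompact_of_equicontinuous _ ?_
    (LipschitzWith.uniformEquicontinuous _ C fun u ↦ u.2.1).equicontinuous
  have himage : ContinuousMap.toFun '' {u : C(X, ℝ) | LipschitzWith C u ∧ u x₀ = 0} =
      {f : X → ℝ | LipschitzWith C f ∧ f x₀ = 0} := by
    ext f
    exact ⟨by rintro ⟨u, hu, rfl⟩; exact hu, fun hf ↦ ⟨⟨f, hf.1.continuous⟩, hf, rfl⟩⟩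
  have hclosed : IsClosed {f : X → ℝ | LipschitzWith C f ∧ f x₀ = 0} := by
    simp only [lipschitzWith_iff_dist_le_mul, ofPred_and, ofPred_forall]
    refine .inter (isClosed_iInter fun x ↦ isClosed_iInter fun y ↦ ?_) ?_
    · exact isClosed_le (by fun_prop) continuous_const
    · exact isClosed_eq (by fun_prop) continuous_const
  rw [himage]
  refine (isCompact_univ_pi fun x ↦ isCompact_closedBall (0 : ℝ) (C * dist x x₀)).of_isClosed_subset
    hclosed fun f hf x _ ↦ ?_
  simpa [hf.2] using hf.1.dist_le_mul x x₀

theorem exists_lipschitzWith_forall_le [Nonempty X] (C : ℝ≥0) {F : C(X, ℝ) → ℝ}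
    (hF : Continuous F) (hF_const : ∀ f c, F (f - .const X c) = F f) :
    ∃ u : C(X, ℝ), LipschitzWith C u ∧ ∀ v : C(X, ℝ), LipschitzWith C v → F v ≤ F u := by
  obtain ⟨x₀⟩ := ‹Nonempty X›
  obtain ⟨u, ⟨hu, -⟩, hmax⟩ := (isCompact_setOf_lipschitzWith_apply_eq_zero C x₀).exists_isMaxOn
    ⟨0, (LipschitzWith.const 0).weaken zero_le, rfl⟩ hF.continuousOn
  refine ⟨u, hu, fun v hv ↦ ?_⟩
  rw [← hF_const v (v x₀)]
  refine hmax ⟨.of_dist_le_mul fun x y ↦ ?_, by simp⟩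
  simpa using hv.dist_le_mul x y

end Lipschitz

section LinearFunctionals

theorem exists_linearMap_le_apply_eq_of_sublinear {E : Type*} [AddCommGroup E] [Module ℝ E]
    {N : E → ℝ} (N_hom : ∀ c : ℝ, 0 < c → ∀ x, N (c • x) = c * N x)
    (N_add : ∀ x y, N (x + y) ≤ N x + N y) (x₀ : E) :
    ∃ g : E →ₗ[ℝ] ℝ, (∀ x, g x ≤ N x) ∧ g x₀ = N x₀ := by
  have N_zero : N 0 = 0 := by linarith [N_hom 2 two_pos 0, congrArg N (smul_zero (A := E) (2 : ℝ))]
  have smul_le (c : ℝ) : c * N x₀ ≤ N (c • x₀) := by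
    rcases lt_trichotomy c 0 with hc | rfl | hc
    · have := N_add (c • x₀) ((-c) • x₀)
      rw [N_hom (-c) (neg_pos.2 hc), ← add_smul, add_neg_cancel, zero_smul, N_zero] at this
      linarith
    · simp [N_zero]
    · exact (N_hom c hc x₀).ge
  have hspan (c : ℝ) (hc : c • x₀ = 0) : c • N x₀ = 0 := by
    rcases smul_eq_zero.1 hc with rfl | rfl <;> simp [N_zero]
  obtain ⟨g, hg_ext, hg_le⟩ := exists_extension_of_le_sublinear
    (LinearPMap.mkSpanSingleton' x₀ (N x₀) hspan) N N_hom N_add <| by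
      rintro ⟨x, hx⟩
      obtain ⟨c, rfl⟩ := Submodule.mem_span_singleton.1 hx
      exact (LinearPMap.mkSpanSingleton'_apply ..).trans_le (smul_le c)
  exact ⟨g, hg_le, (hg_ext ⟨x₀, Submodule.mem_span_singleton_self x₀⟩).trans
    (LinearPMap.mkSpanSingleton'_apply_self ..)⟩

theorem exists_isFiniteMeasure_integral_eq {Z : Type*} [TopologicalSpace Z] [T2Space Z]
    [CompactSpace Z] [MeasurableSpace Z] [BorelSpace Z] (Λ : C(Z, ℝ) →ₚ[ℝ] ℝ) :
    ∃ γ : Measure Z, IsFiniteMeasure γ ∧ ∀ f : C(Z, ℝ), ∫ z, f z ∂γ = Λ f := by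
  let Λc : C_c(Z, ℝ) →ₚ[ℝ] ℝ :=
    { toFun f := Λ f.toContinuousMap
      map_add' f g := map_add Λ f.toContinuousMap g.toContinuousMap
      map_smul' c f := map_smul Λ c f.toContinuousMap
      monotone' _ _ hfg := Λ.monotone' hfg }
  exact ⟨RealRMK.rieszMeasure Λc, inferInstance, fun f ↦
    RealRMK.integral_rieszMeasure Λc (CompactlySupportedContinuousMap.continuousMapEquiv f)⟩

end LinearFunctionals

section CompactIntegrals

variable {X : Type*} [TopologicalSpace X] [CompactSpace X] [MeasurableSpace X]

theorem integrable_of_continuous_of_compactSpace [OpensMeasurableSpace X] {μ : Measure X}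
    [IsFiniteMeasureOnCompacts μ] {f : X → ℝ} (hf : Continuous f) : Integrable f μ :=
  hf.integrable_of_hasCompactSupport (.of_compactSpace f)

theorem continuous_integral_continuousMap [OpensMeasurableSpace X] (μ : Measure X)
    [IsFiniteMeasure μ] : Continuous fun f : C(X, ℝ) ↦ ∫ x, f x ∂μ := by
  refine (LipschitzWith.of_dist_le' (K := μ.real univ) fun f g ↦ ?_).continuous
  rw [dist_eq_norm, dist_eq_norm, ← integral_sub
    (integrable_of_continuous_of_compactSpace f.continuous)
    (integrable_of_continuous_of_compactSpace g.continuous), mul_comm]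
  exact norm_integral_le_of_norm_le_const (.of_forall (f - g).norm_coe_le_norm)

end CompactIntegrals

theorem ext_of_forall_integral_boundedContinuousFunction_le {X : Type*} [TopologicalSpace X]
    [HasOuterApproxClosed X] [MeasurableSpace X] [BorelSpace X] {μ ν : Measure X}
    [IsFiniteMeasure μ] [IsFiniteMeasure ν] (h : ∀ f : X →ᵇ ℝ, ∫ x, f x ∂μ ≤ ∫ x, f x ∂ν) :
    μ = ν :=
  ext_of_forall_integral_eq_of_IsFiniteMeasure fun f ↦ (h f).antisymm <| by
    simpa [integral_neg] using h (-f)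

section Coupling

variable {X Y : Type*} [MeasurableSpace X] [MeasurableSpace Y]

/-- `IsCoupling γ μ ν` says that `γ` is a coupling (transport plan) of `μ` and `ν`. -/
structure IsCoupling (γ : Measure (X × Y)) (μ : Measure X) (ν : Measure Y) : Prop where
  map_fst : γ.map Prod.fst = μ
  map_snd : γ.map Prod.snd = ν

namespace IsCoupling

variable {γ : Measure (X × Y)} {μ : Measure X} {ν : Measure Y}

theorem isProbabilityMeasure [IsProbabilityMeasure μ] (hγ : IsCoupling γ μ ν) :
    IsProbabilityMeasure γ :=
  have : IsProbabilityMeasure (γ.map Prod.fst) := hγ.map_fst ▸ ‹_›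
  Measure.isProbabilityMeasure_of_map Prod.fst

theorem map_prodMap {X' Y' : Type*} [MeasurableSpace X'] [MeasurableSpace Y']
    {f : X → X'} {g : Y → Y'} (hγ : IsCoupling γ μ ν) (hf : Measurable f) (hg : Measurable g) :
    IsCoupling (γ.map (Prod.map f g)) (μ.map f) (ν.map g) where
  map_fst := by
    rw [← hγ.map_fst, Measure.map_map measurable_fst (hf.prodMap hg),
      Measure.map_map hf measurable_fst]
    rfl
  map_snd := by
    rw [← hγ.map_snd, Measure.map_map measurable_snd (hf.prodMap hg),
      Measure.map_map hg measurable_snd]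
    rfl

theorem ae_mem_prod {s : Set X} {t : Set Y} (hγ : IsCoupling γ μ ν)
    (hs : ∀ᵐ x ∂μ, x ∈ s) (ht : ∀ᵐ y ∂ν, y ∈ t) : ∀ᵐ p ∂γ, p ∈ s ×ˢ t := by
  rw [← hγ.map_fst] at hs
  rw [← hγ.map_snd] at ht
  filter_upwards [ae_of_ae_map measurable_fst.aemeasurable hs,
    ae_of_ae_map measurable_snd.aemeasurable ht] with p hp_fst hp_snd using ⟨hp_fst, hp_snd⟩

variable {φ : X → ℝ} {ψ : Y → ℝ} {c : X × Y → ℝ}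

theorem integrable_fst_add_snd (hγ : IsCoupling γ μ ν) (hφ : Integrable φ μ)
    (hψ : Integrable ψ ν) : Integrable (fun p ↦ φ p.1 + ψ p.2) γ := by
  rw [← hγ.map_fst] at hφ
  rw [← hγ.map_snd] at hψ
  exact (hφ.comp_measurable measurable_fst).add (hψ.comp_measurable measurable_snd)

theorem integral_fst_add_snd (hγ : IsCoupling γ μ ν) (hφ : Integrable φ μ)
    (hψ : Integrable ψ ν) :
    ∫ p, (φ p.1 + ψ p.2) ∂γ = ∫ x, φ x ∂μ + ∫ y, ψ y ∂ν := by
  rw [← hγ.map_fst] at hφ ⊢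
  rw [← hγ.map_snd] at hψ ⊢
  rw [integral_map measurable_fst.aemeasurable hφ.aestronglyMeasurable,
    integral_map measurable_snd.aemeasurable hψ.aestronglyMeasurable]
  exact integral_add (hφ.comp_measurable measurable_fst) (hψ.comp_measurable measurable_snd)

theorem integral_add_integral_le (hγ : IsCoupling γ μ ν) (hφ : Integrable φ μ)
    (hψ : Integrable ψ ν) (hc : Integrable c γ) (hle : ∀ x y, φ x + ψ y ≤ c (x, y)) :
    ∫ x, φ x ∂μ + ∫ y, ψ y ∂ν ≤ ∫ p, c p ∂γ := by
  rw [← hγ.integral_fst_add_snd hφ hψ]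
  exact integral_mono (hγ.integrable_fst_add_snd hφ hψ) hc fun p ↦ hle p.1 p.2

theorem integral_eq_integral_add_integral_iff (hγ : IsCoupling γ μ ν) (hφ : Integrable φ μ)
    (hψ : Integrable ψ ν) (hc : Integrable c γ) (hle : ∀ x y, φ x + ψ y ≤ c (x, y)) :
    ∫ p, c p ∂γ = ∫ x, φ x ∂μ + ∫ y, ψ y ∂ν ↔ ∀ᵐ p ∂γ, φ p.1 + ψ p.2 = c p := by
  rw [← hγ.integral_fst_add_snd hφ hψ, eq_comm]
  exact integral_eq_iff_of_ae_le (hγ.integrable_fst_add_snd hφ hψ) hc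
    (.of_forall fun p ↦ hle p.1 p.2)

end IsCoupling

namespace IsCoupling

variable {X : Type*} [PseudoMetricSpace X] [MeasurableSpace X] {γ : Measure (X × X)}
  {μ ν : Measure X} {u : X → ℝ}

theorem integral_sub_integral_le_integral_dist (hγ : IsCoupling γ μ ν) (hu : LipschitzWith 1 u)
    (hμ : Integrable u μ) (hν : Integrable u ν) (hd : Integrable (fun p ↦ dist p.1 p.2) γ) :
    ∫ x, u x ∂μ - ∫ y, u y ∂ν ≤ ∫ p, dist p.1 p.2 ∂γ := by
  rw [sub_eq_add_neg, ← integral_neg]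
  exact hγ.integral_add_integral_le hμ hν.neg hd fun x y ↦ by
    simpa [← sub_eq_add_neg, add_comm] using hu.le_add_mul x y

theorem integral_dist_eq_integral_sub_integral_iff (hγ : IsCoupling γ μ ν)
    (hu : LipschitzWith 1 u) (hμ : Integrable u μ) (hν : Integrable u ν)
    (hd : Integrable (fun p ↦ dist p.1 p.2) γ) :
    ∫ p, dist p.1 p.2 ∂γ = ∫ x, u x ∂μ - ∫ y, u y ∂ν ↔
      ∀ᵐ p ∂γ, u p.1 - u p.2 = dist p.1 p.2 := by
  simp only [sub_eq_add_neg, ← integral_neg]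
  exact hγ.integral_eq_integral_add_integral_iff hμ hν.neg hd fun x y ↦ by
    simpa [← sub_eq_add_neg, add_comm] using hu.le_add_mul x y

end IsCoupling

end Coupling

section DualValue

variable {X Y : Type*} [TopologicalSpace X] [CompactSpace X] [MeasurableSpace X]
  [TopologicalSpace Y] [CompactSpace Y] [MeasurableSpace Y]

/-- The pairs `(φ, ψ)` of continuous functions such that `φ x + ψ y` dominates `h (x, y)`,
i.e. the constraint set of the dual Kantorovich problem, with the sign suited to maximizing
the integral of `h` over couplings. -/
def splitMajorants (h : C(X × Y, ℝ)) : Set (C(X, ℝ) × C(Y, ℝ)) :=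
  {q | ∀ x y, h (x, y) ≤ q.1 x + q.2 y}

/-- The value of the dual Kantorovich problem: the infimum of `∫ φ dμ + ∫ ψ dν` over all
pairs `(φ, ψ)` in `splitMajorants h`. -/
noncomputable def splitUpperIntegral (μ : Measure X) (ν : Measure Y) (h : C(X × Y, ℝ)) : ℝ :=
  ⨅ q : splitMajorants h, (∫ x, q.1.1 x ∂μ + ∫ y, q.1.2 y ∂ν)

instance (h : C(X × Y, ℝ)) : Nonempty (splitMajorants h) :=
  ⟨(.const X ‖h‖, 0), fun x y ↦ by simpa using h.apply_le_norm (x, y)⟩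

variable [OpensMeasurableSpace X] [OpensMeasurableSpace Y]
  (μ : Measure X) (ν : Measure Y) [IsProbabilityMeasure μ] [IsProbabilityMeasure ν]

theorem neg_norm_le_integral_add_integral_of_mem_splitMajorants {h : C(X × Y, ℝ)}
    {q : C(X, ℝ) × C(Y, ℝ)} (hq : q ∈ splitMajorants h) :
    -‖h‖ ≤ ∫ x, q.1 x ∂μ + ∫ y, q.2 y ∂ν := by
  have hprod : IsCoupling (μ.prod ν) μ ν := ⟨by simp, by simp⟩
  have hq_fst := integrable_of_continuous_of_compactSpace (μ := μ) q.1.continuous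
  have hq_snd := integrable_of_continuous_of_compactSpace (μ := ν) q.2.continuous
  calc
    -‖h‖ = ∫ _, -‖h‖ ∂(μ.prod ν) := by simp
    _ ≤ ∫ p, (q.1 p.1 + q.2 p.2) ∂(μ.prod ν) :=
      integral_mono (integrable_const _) (hprod.integrable_fst_add_snd hq_fst hq_snd)
        fun p ↦ (h.neg_norm_le_apply p).trans (hq p.1 p.2)
    _ = ∫ x, q.1 x ∂μ + ∫ y, q.2 y ∂ν := hprod.integral_fst_add_snd hq_fst hq_snd

theorem splitUpperIntegral_le {h : C(X × Y, ℝ)} {φ : C(X, ℝ)} {ψ : C(Y, ℝ)}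
    (hle : ∀ x y, h (x, y) ≤ φ x + ψ y) :
    splitUpperIntegral μ ν h ≤ ∫ x, φ x ∂μ + ∫ y, ψ y ∂ν :=
  ciInf_le ⟨-‖h‖, forall_mem_range.2 fun q ↦
    neg_norm_le_integral_add_integral_of_mem_splitMajorants μ ν q.2⟩
    (⟨(φ, ψ), hle⟩ : splitMajorants h)

theorem splitUpperIntegral_add_le (h k : C(X × Y, ℝ)) :
    splitUpperIntegral μ ν (h + k) ≤ splitUpperIntegral μ ν h + splitUpperIntegral μ ν k := by
  refine le_ciInf_add_ciInf fun ⟨⟨φ, ψ⟩, hh⟩ ⟨⟨φ', ψ'⟩, hk⟩ ↦ ?_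
  calc
    splitUpperIntegral μ ν (h + k) ≤ ∫ x, (φ + φ') x ∂μ + ∫ y, (ψ + ψ') y ∂ν :=
      splitUpperIntegral_le μ ν fun x y ↦ by
        simpa only [ContinuousMap.add_apply, add_add_add_comm] using add_le_add (hh x y) (hk x y)
    _ = ∫ x, φ x ∂μ + ∫ x, φ' x ∂μ + (∫ y, ψ y ∂ν + ∫ y, ψ' y ∂ν) := by
      congr 1 <;> exact integral_add
        (integrable_of_continuous_of_compactSpace (map_continuous _))
        (integrable_of_continuous_of_compactSpace (map_continuous _))
    _ = ∫ x, φ x ∂μ + ∫ y, ψ y ∂ν + (∫ x, φ' x ∂μ + ∫ y, ψ' y ∂ν) := add_add_add_comm ..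

theorem splitUpperIntegral_smul_le {c : ℝ} (hc : 0 < c) (h : C(X × Y, ℝ)) :
    splitUpperIntegral μ ν (c • h) ≤ c * splitUpperIntegral μ ν h := by
  rw [← div_le_iff₀' hc]
  refine le_ciInf fun ⟨⟨φ, ψ⟩, hle⟩ ↦ (div_le_iff₀' hc).2 ?_
  calc
    splitUpperIntegral μ ν (c • h) ≤ ∫ x, (c • φ) x ∂μ + ∫ y, (c • ψ) y ∂ν :=
      splitUpperIntegral_le μ ν fun x y ↦ by
        simpa only [ContinuousMap.smul_apply, smul_eq_mul, ← mul_add] using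
          mul_le_mul_of_nonneg_left (hle x y) hc.le
    _ = c * (∫ x, φ x ∂μ + ∫ y, ψ y ∂ν) := by
      simp only [ContinuousMap.smul_apply, smul_eq_mul, integral_const_mul, mul_add]

theorem splitUpperIntegral_smul {c : ℝ} (hc : 0 < c) (h : C(X × Y, ℝ)) :
    splitUpperIntegral μ ν (c • h) = c * splitUpperIntegral μ ν h := by
  refine (splitUpperIntegral_smul_le μ ν hc h).antisymm ?_
  rw [← le_inv_mul_iff₀ hc]
  simpa [smul_smul, hc.ne'] using splitUpperIntegral_smul_le μ ν (inv_pos.2 hc) (c • h)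

end DualValue

section KantorovichDuality

variable {X Y : Type*} [TopologicalSpace X] [CompactSpace X] [MeasurableSpace X] [BorelSpace X]
  [HasOuterApproxClosed X] [TopologicalSpace Y] [CompactSpace Y] [MeasurableSpace Y] [BorelSpace Y]
  [HasOuterApproxClosed Y] (μ : Measure X) (ν : Measure Y) [IsProbabilityMeasure μ]
  [IsProbabilityMeasure ν]

variable {μ ν} in
theorem isCoupling_of_integral_le_splitUpperIntegral {γ : Measure (X × Y)} [IsFiniteMeasure γ]
    (hγ : ∀ h : C(X × Y, ℝ), ∫ p, h p ∂γ ≤ splitUpperIntegral μ ν h) : IsCoupling γ μ ν where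
  map_fst := ext_of_forall_integral_boundedContinuousFunction_le fun φ ↦ by
    rw [integral_map (by fun_prop) (by fun_prop)]
    simpa using (hγ (φ.toContinuousMap.comp .fst)).trans
      (splitUpperIntegral_le μ ν (φ := φ.toContinuousMap) (ψ := 0) (by simp))
  map_snd := ext_of_forall_integral_boundedContinuousFunction_le fun ψ ↦ by
    rw [integral_map (by fun_prop) (by fun_prop)]
    simpa using (hγ (ψ.toContinuousMap.comp .snd)).trans
      (splitUpperIntegral_le μ ν (φ := 0) (ψ := ψ.toContinuousMap) (by simp))

theorem exists_isCoupling_integral_eq_splitUpperIntegral [T2Space X] [T2Space Y]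
    [SecondCountableTopologyEither X Y] (h : C(X × Y, ℝ)) :
    ∃ γ : Measure (X × Y), IsCoupling γ μ ν ∧ ∫ p, h p ∂γ = splitUpperIntegral μ ν h := by
  obtain ⟨f, hf_le, hf_eq⟩ := exists_linearMap_le_apply_eq_of_sublinear
    (fun c hc ↦ splitUpperIntegral_smul μ ν hc) (splitUpperIntegral_add_le μ ν) h
  have hf_nonneg (k : C(X × Y, ℝ)) (hk : 0 ≤ k) : 0 ≤ f k := by
    have := (hf_le (-k)).trans (splitUpperIntegral_le μ ν (φ := 0) (ψ := 0) fun x y ↦ by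
      simpa using hk (x, y))
    simpa using this
  obtain ⟨γ, _, hγ⟩ := exists_isFiniteMeasure_integral_eq (PositiveLinearMap.mk₀ f hf_nonneg)
  exact ⟨γ, isCoupling_of_integral_le_splitUpperIntegral fun k ↦ (hγ k).trans_le (hf_le k),
    (hγ h).trans hf_eq⟩

end KantorovichDuality

section KantorovichRubinstein

theorem neg_le_splitUpperIntegral_neg_dist {X : Type*} [PseudoMetricSpace X] [CompactSpace X]
    [MeasurableSpace X] [OpensMeasurableSpace X] (μ ν : Measure X) [IsFiniteMeasure μ]
    [IsFiniteMeasure ν] {a : ℝ}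
    (ha : ∀ u : C(X, ℝ), LipschitzWith 1 u → ∫ x, u x ∂μ - ∫ y, u y ∂ν ≤ a) :
    -a ≤ splitUpperIntegral μ ν (-⟨fun p : X × X ↦ dist p.1 p.2, continuous_dist⟩) := by
  refine le_ciInf fun ⟨⟨φ, ψ⟩, hle⟩ ↦ ?_
  have hφψ (x y : X) : -φ x ≤ ψ y + (1 : ℝ≥0) * dist x y := by
    have : -dist x y ≤ φ x + ψ y := hle x y
    simp only [NNReal.coe_one, one_mul]
    linarith
  obtain ⟨u, hu, hφu, huψ⟩ := exists_lipschitzWith_between 1 hφψ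
  have integrable (m : Measure X) [IsFiniteMeasure m] {f : X → ℝ} (hf : Continuous f) :
      Integrable f m := integrable_of_continuous_of_compactSpace hf
  have hφ : ∫ x, -φ x ∂μ ≤ ∫ x, u x ∂μ :=
    integral_mono (integrable μ (by fun_prop)) (integrable μ hu.continuous) hφu
  have hψ : ∫ y, u y ∂ν ≤ ∫ y, ψ y ∂ν :=
    integral_mono (integrable ν hu.continuous) (integrable ν (by fun_prop)) huψ
  rw [integral_neg] at hφ
  linarith [show ∫ x, u x ∂μ - ∫ y, u y ∂ν ≤ a from ha ⟨u, hu.continuous⟩ hu]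

theorem exists_lipschitzWith_isCoupling_integral_dist_eq {X : Type*} [MetricSpace X]
    [CompactSpace X] [MeasurableSpace X] [BorelSpace X] (μ ν : Measure X)
    [IsProbabilityMeasure μ] [IsProbabilityMeasure ν] :
    ∃ u : X → ℝ, LipschitzWith 1 u ∧ ∃ γ : Measure (X × X), IsCoupling γ μ ν ∧
      ∫ p, dist p.1 p.2 ∂γ = ∫ x, u x ∂μ - ∫ y, u y ∂ν := by
  have : Nonempty X := nonempty_of_isProbabilityMeasure μ
  have integral_sub_const (m : Measure X) [IsProbabilityMeasure m] (f : C(X, ℝ)) (c : ℝ) :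
      ∫ x, (f - .const X c) x ∂m = ∫ x, f x ∂m - c := by
    simpa using integral_sub (μ := m)
      (integrable_of_continuous_of_compactSpace f.continuous) (integrable_const c)
  obtain ⟨u, hu, hmax⟩ := exists_lipschitzWith_forall_le 1
    (F := fun f : C(X, ℝ) ↦ ∫ x, f x ∂μ - ∫ x, f x ∂ν)
    ((continuous_integral_continuousMap μ).sub (continuous_integral_continuousMap ν))
    fun f c ↦ by simp only [integral_sub_const, sub_sub_sub_cancel_right]
  obtain ⟨γ, hγ, hγ_eq⟩ := exists_isCoupling_integral_eq_splitUpperIntegral μ ν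
    (-⟨fun p : X × X ↦ dist p.1 p.2, continuous_dist⟩)
  have := hγ.isProbabilityMeasure
  refine ⟨u, hu, γ, hγ, le_antisymm ?_ <| hγ.integral_sub_integral_le_integral_dist hu
    (integrable_of_continuous_of_compactSpace u.continuous)
    (integrable_of_continuous_of_compactSpace u.continuous)
    (integrable_of_continuous_of_compactSpace continuous_dist)⟩
  have hdual := neg_le_splitUpperIntegral_neg_dist μ ν hmax
  rw [← hγ_eq] at hdual
  exact le_sub_iff_add_le.2 (by simpa [integral_neg] using hdual)

end KantorovichRubinstein

section CompactSupport

theorem exists_isCompact_ae_mem_and_ae_mem {X : Type*} [TopologicalSpace X] [MeasurableSpace X]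
    {μ ν : Measure X}
    (hμ : ∃ K : Set X, IsCompact K ∧ μ Kᶜ = 0) (hν : ∃ K : Set X, IsCompact K ∧ ν Kᶜ = 0) :
    ∃ K : Set X, IsCompact K ∧ (∀ᵐ x ∂μ, x ∈ K) ∧ ∀ᵐ x ∂ν, x ∈ K := by
  obtain ⟨K, hK, hKμ⟩ := hμ
  obtain ⟨L, hL, hLν⟩ := hν
  exact ⟨K ∪ L, hK.union hL, (show ∀ᵐ x ∂μ, x ∈ K from hKμ).mono fun _ ↦ .inl,
    (show ∀ᵐ x ∂ν, x ∈ L from hLν).mono fun _ ↦ .inr⟩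

variable {X : Type*} [MetricSpace X] [MeasurableSpace X] [BorelSpace X] {K : Set X}

theorem integrable_of_continuous_of_ae_mem_isCompact {μ : Measure X} [IsFiniteMeasure μ]
    {f : X → ℝ} (hf : Continuous f) (hK : IsCompact K) (hμ : ∀ᵐ x ∂μ, x ∈ K) :
    Integrable f μ := by
  rw [← Measure.restrict_eq_self_of_ae_mem hμ]
  exact hf.continuousOn.integrableOn_compact hK

-- Without second countability the product σ-algebra on `X × X` need not be Borel, but it is
-- on `K × K`; so `c` is only handled after restriction to `K × K`.
theorem integrable_of_continuous_of_ae_mem_prod_isCompact {γ : Measure (X × X)}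
    [IsFiniteMeasure γ] {c : X × X → ℝ} (hc : Continuous c) (hK : IsCompact K)
    (hγ : ∀ᵐ p ∂γ, p ∈ K ×ˢ K) : Integrable c γ := by
  have : CompactSpace K := isCompact_iff_compactSpace.1 hK
  have hval := MeasurableEmbedding.subtype_coe hK.measurableSet
  have hrange : range (Prod.map ((↑) : K → X) ((↑) : K → X)) = K ×ˢ K := by
    rw [range_prodMap, Subtype.range_coe]
  rw [← Measure.restrict_eq_self_of_ae_mem hγ, ← hrange, ← (hval.prodMap hval).map_comap,
    (hval.prodMap hval).integrable_map_iff]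
  exact integrable_of_continuous_of_compactSpace (by fun_prop)

theorem exists_lipschitzWith_isCoupling_integral_dist_eq_of_ae_mem_isCompact {μ ν : Measure X}
    [IsProbabilityMeasure μ] [IsProbabilityMeasure ν] (hK : IsCompact K)
    (hμ : ∀ᵐ x ∂μ, x ∈ K) (hν : ∀ᵐ x ∂ν, x ∈ K) :
    ∃ u : X → ℝ, LipschitzWith 1 u ∧ ∃ γ : Measure (X × X), IsCoupling γ μ ν ∧
      ∫ p, dist p.1 p.2 ∂γ = ∫ x, u x ∂μ - ∫ y, u y ∂ν := by
  have : CompactSpace K := isCompact_iff_compactSpace.1 hK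
  have hval := MeasurableEmbedding.subtype_coe hK.measurableSet
  have map_comap {m : Measure X} (hm : ∀ᵐ x ∂m, x ∈ K) :
      (m.comap ((↑) : K → X)).map (↑) = m := by
    rw [map_comap_subtype_coe hK.measurableSet, Measure.restrict_eq_self_of_ae_mem hm]
  have := hval.isProbabilityMeasure_comap (μ := μ) (by simpa using hμ)
  have := hval.isProbabilityMeasure_comap (μ := ν) (by simpa using hν)
  obtain ⟨u₀, hu₀, γ, hγ, hγ_eq⟩ := exists_lipschitzWith_isCoupling_integral_dist_eq
    (μ.comap ((↑) : K → X)) (ν.comap ((↑) : K → X))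
  obtain ⟨u, hu, hu_ext⟩ := exists_lipschitzWith_extension hu₀
  have hint {m : Measure X} (hm : ∀ᵐ x ∂m, x ∈ K) :
      ∫ x, u₀ x ∂(m.comap ((↑) : K → X)) = ∫ x, u x ∂m := by
    simp only [← hu_ext]
    rw [integral_subtype_comap hK.measurableSet, Measure.restrict_eq_self_of_ae_mem hm]
  refine ⟨u, hu, γ.map (Prod.map (↑) (↑)), ?_, ?_⟩
  · simpa only [map_comap hμ, map_comap hν] using hγ.map_prodMap hval.measurable hval.measurable
  · rw [(hval.prodMap hval).integral_map, ← hint hμ, ← hint hν]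
    exact hγ_eq

end CompactSupport

theorem stmt_2_general {X : Type*} [MetricSpace X] [MeasurableSpace X] [BorelSpace X]
    (μ ν : Measure X) [IsProbabilityMeasure μ] [IsProbabilityMeasure ν]
    (hμ : ∃ K : Set X, IsCompact K ∧ μ Kᶜ = 0)
    (hν : ∃ K : Set X, IsCompact K ∧ ν Kᶜ = 0) :
    ∃ u : X → ℝ, LipschitzWith 1 u ∧
      (∫ x, u x ∂μ - ∫ y, u y ∂ν =
        sInf {r : ℝ | ∃ γ : Measure (X × X), IsProbabilityMeasure γ ∧
          γ.map Prod.fst = μ ∧ γ.map Prod.snd = ν ∧ r = ∫ p, dist p.1 p.2 ∂γ}) ∧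
      ∀ γ : Measure (X × X), IsProbabilityMeasure γ →
        γ.map Prod.fst = μ → γ.map Prod.snd = ν →
        ((∫ p, dist p.1 p.2 ∂γ = ∫ x, u x ∂μ - ∫ y, u y ∂ν) ↔
          (∀ᵐ p ∂γ, u p.1 - u p.2 = dist p.1 p.2)) := by
  obtain ⟨K, hK, hKμ, hKν⟩ := exists_isCompact_ae_mem_and_ae_mem hμ hν
  obtain ⟨u, hu, γ₀, hγ₀, hγ₀_eq⟩ :=
    exists_lipschitzWith_isCoupling_integral_dist_eq_of_ae_mem_isCompact hK hKμ hKν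
  have hu_μ := integrable_of_continuous_of_ae_mem_isCompact hu.continuous hK hKμ
  have hu_ν := integrable_of_continuous_of_ae_mem_isCompact hu.continuous hK hKν
  have integrable_dist {γ : Measure (X × X)} [IsProbabilityMeasure γ] (hγ : IsCoupling γ μ ν) :
      Integrable (fun p ↦ dist p.1 p.2) γ :=
    integrable_of_continuous_of_ae_mem_prod_isCompact continuous_dist hK (hγ.ae_mem_prod hKμ hKν)
  refine ⟨u, hu, (IsLeast.csInf_eq ⟨?_, ?_⟩).symm, fun γ _ h_fst h_snd ↦ ?_⟩
  · exact ⟨γ₀, hγ₀.isProbabilityMeasure, hγ₀.map_fst, hγ₀.map_snd, hγ₀_eq.symm⟩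
  · rintro _ ⟨γ, _, h_fst, h_snd, rfl⟩
    have hγ : IsCoupling γ μ ν := ⟨h_fst, h_snd⟩
    exact hγ.integral_sub_integral_le_integral_dist hu hu_μ hu_ν (integrable_dist hγ)
  · have hγ : IsCoupling γ μ ν := ⟨h_fst, h_snd⟩
    exact hγ.integral_dist_eq_integral_sub_integral_iff hu hu_μ hu_ν (integrable_dist hγ)

theorem stmt_2 {X : Type*} [MetricSpace X] [CompleteSpace X]
    [TopologicalSpace.SeparableSpace X] [MeasurableSpace X] [BorelSpace X]
    (μ ν : Measure X) [IsProbabilityMeasure μ] [IsProbabilityMeasure ν]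
    (hμ : ∃ K : Set X, IsCompact K ∧ μ Kᶜ = 0)
    (hν : ∃ K : Set X, IsCompact K ∧ ν Kᶜ = 0) :
    ∃ u : X → ℝ, LipschitzWith 1 u ∧
      (∫ x, u x ∂μ - ∫ y, u y ∂ν =
        sInf {r : ℝ | ∃ γ : Measure (X × X), IsProbabilityMeasure γ ∧
          γ.map Prod.fst = μ ∧ γ.map Prod.snd = ν ∧ r = ∫ p, dist p.1 p.2 ∂γ}) ∧
      ∀ γ : Measure (X × X), IsProbabilityMeasure γ →
        γ.map Prod.fst = μ → γ.map Prod.snd = ν →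
        ((∫ p, dist p.1 p.2 ∂γ = ∫ x, u x ∂μ - ∫ y, u y ∂ν) ↔
          (∀ᵐ p ∂γ, u p.1 - u p.2 = dist p.1 p.2)) :=
  stmt_2_general μ ν hμ hν
end
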